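/- Let n ≥ 6, 1 ≤ k ≤ n, and let S be a primitive non-powerful signed digraph of order n whose underlying digraph D is isomorphic to neither D₁ nor D₂. Then L(S,k) ≤ (2n-k)(n-1) - 3. -/

import Mathlib

/-- There is a walk of length `l` from `u` to `v` in the digraph with arc relation `A`. -/
def HasWalk {n : ℕ} (A : Fin n → Fin n → Prop) (u v : Fin n) (l : ℕ) : Prop :=
  ∃ f : ℕ → Fin n, f 0 = u ∧ f l = v ∧ ∀ i < l, A (f i) (f (i + 1))

/-- A digraph is primitive if for some `p > 0` every ordered pair of vertices is
joined by a walk of length exactly `p`. -/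
def Primitive {n : ℕ} (A : Fin n → Fin n → Prop) : Prop :=
  ∃ p, 0 < p ∧ ∀ u v : Fin n, HasWalk A u v p

/-- `f` is the vertex sequence of a walk of length `l` from `u` to `v` in `A`. -/
def IsWalkSeq {n : ℕ} (A : Fin n → Fin n → Prop) (f : ℕ → Fin n) (u v : Fin n) (l : ℕ) : Prop :=
  f 0 = u ∧ f l = v ∧ ∀ i < l, A (f i) (f (i + 1))

/-- The sign of (the length-`l` initial part of) the walk with vertex sequence `f`
in the signed digraph `S`. -/
def walkSign {n : ℕ} (S : Fin n → Fin n → ℤ) (f : ℕ → Fin n) (l : ℕ) : ℤ :=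
  ∏ i ∈ Finset.range l, S (f i) (f (i + 1))

/-- The underlying digraph of a signed digraph `S`. -/
def Underlying {n : ℕ} (S : Fin n → Fin n → ℤ) : Fin n → Fin n → Prop :=
  fun u v => S u v ≠ 0

/-- All entries of `S` are in `{0, 1, -1}`: `S` is a sign pattern / signed digraph. -/
def SignPattern {n : ℕ} (S : Fin n → Fin n → ℤ) : Prop :=
  ∀ u v, S u v = 0 ∨ S u v = 1 ∨ S u v = -1

/-- There is a pair of SSSD walks of length `l` from `u` to `v`: two walks with the
same endpoints and length but different signs. -/
def HasSSSD {n : ℕ} (S : Fin n → Fin n → ℤ) (u v : Fin n) (l : ℕ) : Prop :=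
  ∃ f g : ℕ → Fin n, IsWalkSeq (Underlying S) f u v l ∧ IsWalkSeq (Underlying S) g u v l ∧
    walkSign S f l ≠ walkSign S g l

/-- A signed digraph is non-powerful iff it contains a pair of SSSD walks. -/
def NonPowerful {n : ℕ} (S : Fin n → Fin n → ℤ) : Prop :=
  ∃ u v l, HasSSSD S u v l

/-- `exp_D(X)`: the least `p` such that every vertex is reachable from some vertex
of `X` by a walk of length exactly `p`. -/
noncomputable def setExp {n : ℕ} (A : Fin n → Fin n → Prop) (X : Finset (Fin n)) : ℕ :=
  sInf {p | ∀ v, ∃ x ∈ X, HasWalk A x v p}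

/-- `F(D,k)`: the `k`th upper multiexponent. -/
noncomputable def upperMultiexp {n : ℕ} (A : Fin n → Fin n → Prop) (k : ℕ) : ℕ :=
  sSup {e | ∃ X : Finset (Fin n), X.card = k ∧ setExp A X = e}

/-- `l_S(X)`: the least `p` such that every vertex admits a pair of SSSD walks of
length `p` from some vertex of `X`. -/
noncomputable def setBase {n : ℕ} (S : Fin n → Fin n → ℤ) (X : Finset (Fin n)) : ℕ :=
  sInf {p | ∀ v, ∃ x ∈ X, HasSSSD S x v p}

/-- `L(S,k)`: the `k`th upper base. -/
noncomputable def upperBase {n : ℕ} (S : Fin n → Fin n → ℤ) (k : ℕ) : ℕ :=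
  sSup {e | ∃ X : Finset (Fin n), X.card = k ∧ setBase S X = e}

/-- Distance from `u` to `v` in the digraph `A`. -/
noncomputable def ddist {n : ℕ} (A : Fin n → Fin n → Prop) (u v : Fin n) : ℕ :=
  sInf {l | HasWalk A u v l}

/-- Diameter of the digraph `A`. -/
noncomputable def diam {n : ℕ} (A : Fin n → Fin n → Prop) : ℕ :=
  sSup {d | ∃ u v : Fin n, ddist A u v = d}

/-- `f` is the vertex sequence of a cycle of length `p` in `A`: a closed walk of
length `p` whose first `p` vertices are pairwise distinct. -/
def IsCycleSeq {n : ℕ} (A : Fin n → Fin n → Prop) (f : ℕ → Fin n) (p : ℕ) : Prop :=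
  0 < p ∧ f p = f 0 ∧ (∀ i < p, A (f i) (f (i + 1))) ∧
    ∀ i < p, ∀ j < p, f i = f j → i = j

/-- The digraph `D₁` on `{1,…,n}` (vertex `i` is index `i-1`): the Hamiltonian cycle
`1→2→⋯→n→1` together with the extra arc `(n-1)→1`. -/
def D1 (n : ℕ) : Fin n → Fin n → Prop := fun u v =>
  (v.val = u.val + 1) ∨ (u.val = n - 1 ∧ v.val = 0) ∨ (u.val = n - 2 ∧ v.val = 0)

/-- The digraph `D₂`: `D₁` together with the extra arc `(n)→2`. -/
def D2 (n : ℕ) : Fin n → Fin n → Prop := fun u v =>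
  D1 n u v ∨ (u.val = n - 1 ∧ v.val = 1)

/-- Isomorphism of digraphs on the same vertex set `Fin n`. -/
def DigraphIso {n : ℕ} (A B : Fin n → Fin n → Prop) : Prop :=
  ∃ e : Fin n ≃ Fin n, ∀ u v, A u v ↔ B (e u) (e v)

/-- Signed walks, by recursion on the length. -/
def SW {n : ℕ} (S : Fin n → Fin n → ℤ) : ℕ → Fin n → Fin n → ℤ → Prop
  | 0, u, v, σ => u = v ∧ σ = 1
  | l + 1, u, v, σ => ∃ w τ, S u w ≠ 0 ∧ SW S l w v τ ∧ σ = S u w * τ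

section
variable {n : ℕ} {S : Fin n → Fin n → ℤ}

lemma SW.append : ∀ {a b : ℕ} {u v w : Fin n} {σ τ : ℤ}, SW S a u v σ → SW S b v w τ →
    SW S (a + b) u w (σ * τ) := by
  intro a
  induction a with
  | zero =>
    rintro b u v w σ τ ⟨rfl, rfl⟩ h
    simpa using h
  | succ a ih =>
    rintro b u v w σ τ ⟨x, ρ, h0, h1, rfl⟩ h
    rw [show a + 1 + b = (a + b) + 1 by omega]
    exact ⟨x, ρ * τ, h0, ih h1 h, by ring⟩

lemma SW.split : ∀ {a b : ℕ} {u w : Fin n} {σ : ℤ}, SW S (a + b) u w σ →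
    ∃ v σ₁ σ₂, SW S a u v σ₁ ∧ SW S b v w σ₂ ∧ σ = σ₁ * σ₂ := by
  intro a
  induction a with
  | zero =>
    intro b u w σ h
    rw [Nat.zero_add] at h
    exact ⟨u, 1, σ, ⟨rfl, rfl⟩, h, by ring⟩
  | succ a ih =>
    intro b u w σ h
    rw [show a + 1 + b = (a + b) + 1 by omega] at h
    obtain ⟨x, ρ, h0, h1, rfl⟩ := h
    obtain ⟨v, s1, s2, h2, h3, rfl⟩ := ih h1
    exact ⟨v, S u x * s1, s2, ⟨x, s1, h0, h2, rfl⟩, h3, by ring⟩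

lemma SW.one {u v : Fin n} (h : S u v ≠ 0) : SW S 1 u v (S u v) :=
  ⟨v, 1, h, ⟨rfl, rfl⟩, by ring⟩

lemma SW.pow {p : ℕ} {u : Fin n} {σ : ℤ} (h : SW S p u u σ) : ∀ q : ℕ, SW S (q * p) u u (σ ^ q) := by
  intro q
  induction q with
  | zero => simp [SW]
  | succ q ih =>
    rw [Nat.succ_mul, pow_succ]
    exact ih.append h

lemma SW.sign (hsp : SignPattern S) : ∀ {l : ℕ} {u v : Fin n} {σ : ℤ}, SW S l u v σ →
    σ = 1 ∨ σ = -1 := by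
  intro l
  induction l with
  | zero => rintro u v σ ⟨_, h⟩; exact Or.inl h
  | succ l ih =>
    rintro u v σ ⟨x, ρ, h0, h1, rfl⟩
    rcases hsp u x with h | h | h <;> rcases ih h1 with h' | h' <;> simp_all

lemma SW.of_seq (f : ℕ → Fin n) (l : ℕ) (hf : ∀ i < l, S (f i) (f (i + 1)) ≠ 0) :
    ∀ a d, a + d ≤ l → SW S d (f a) (f (a + d)) (∏ i ∈ Finset.Ico a (a + d), S (f i) (f (i + 1))) := by
  intro a d
  induction d with
  | zero => intro _; simp [SW]
  | succ d ih =>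
    intro h
    have := (ih (by omega)).append (SW.one (hf (a + d) (by omega)))
    rw [show a + (d + 1) = (a + d) + 1 by omega, Finset.prod_Ico_succ_top (by omega)]
    exact this

lemma SW.to_seq : ∀ {l : ℕ} {u v : Fin n} {σ : ℤ}, SW S l u v σ →
    ∃ f, IsWalkSeq (Underlying S) f u v l ∧ walkSign S f l = σ := by
  intro l
  induction l with
  | zero =>
    rintro u v σ ⟨rfl, rfl⟩
    exact ⟨fun _ => u, ⟨rfl, rfl, by simp⟩, by simp [walkSign]⟩
  | succ l ih =>
    rintro u v σ ⟨x, ρ, h0, h1, rfl⟩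
    obtain ⟨g, ⟨g0, gl, ga⟩, gs⟩ := ih h1
    refine ⟨fun i => Nat.casesOn i u g, ⟨rfl, gl, ?_⟩, ?_⟩
    · intro i hi
      cases i with
      | zero => simpa [Underlying, g0] using h0
      | succ i => exact ga i (by omega)
    · unfold walkSign at *
      rw [Finset.prod_range_succ']
      show (∏ i ∈ Finset.range l, S (g i) (g (i + 1))) * S u (g 0) = _
      rw [g0, gs, mul_comm]

lemma SW.of_walk {f : ℕ → Fin n} {u v : Fin n} {l : ℕ} (h : IsWalkSeq (Underlying S) f u v l) :
    SW S l u v (walkSign S f l) := by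
  obtain ⟨rfl, rfl, h⟩ := h
  have := SW.of_seq (S := S) f l h 0 l (by omega)
  rw [walkSign, Finset.range_eq_Ico]
  rw [Nat.zero_add] at this
  exact this

lemma hasSSSD_iff {u v : Fin n} {l : ℕ} :
    HasSSSD S u v l ↔ ∃ σ τ, σ ≠ τ ∧ SW S l u v σ ∧ SW S l u v τ := by
  constructor
  · rintro ⟨f, g, hf, hg, h⟩
    exact ⟨_, _, h, SW.of_walk hf, SW.of_walk hg⟩
  · rintro ⟨σ, τ, h, h1, h2⟩
    obtain ⟨f, hf, rfl⟩ := h1.to_seq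
    obtain ⟨g, hg, rfl⟩ := h2.to_seq
    exact ⟨f, g, hf, hg, h⟩

/-- Some closed walk violating a multiplicative property gives a simple cycle violating it. -/
lemma exists_cycle (Q : ℕ → ℤ → Prop)
    (hQ : ∀ p q σ τ, Q p σ → Q q τ → Q (p + q) (σ * τ))
    (hex : ∃ l, 0 < l ∧ ∃ u σ, SW S l u u σ ∧ ¬ Q l σ) :
    ∃ f l, IsCycleSeq (Underlying S) f l ∧ ¬ Q l (walkSign S f l) := by
  classical
  obtain ⟨hl, u, σ, h, hn⟩ := Nat.find_spec hex
  have hmin : ∀ m, m < Nat.find hex → 0 < m → ∀ u σ, SW S m u u σ → Q m σ := by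
    intro m hm h0 u σ hs
    by_contra hc
    exact Nat.find_min hex hm ⟨h0, u, σ, hs, hc⟩
  generalize Nat.find hex = l at *
  obtain ⟨f, ⟨f0, fl, fa⟩, rfl⟩ := h.to_seq
  refine ⟨f, l, ⟨hl, by rw [fl, f0], fa, ?_⟩, hn⟩
  have key : ∀ i j, i < j → j < l → f i ≠ f j := by
    intro i j hij hj heq
    have a1 := SW.of_seq (S := S) f l fa 0 i (by omega)
    have a2 := SW.of_seq (S := S) f l fa i (j - i) (by omega)
    have a3 := SW.of_seq (S := S) f l fa j (l - j) (by omega)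
    rw [show i + (j - i) = j by omega] at a2
    rw [show j + (l - j) = l by omega] at a3
    rw [show 0 + i = i by omega] at a1
    have q2 := hmin (j - i) (by omega) (by omega) (f i) _ (by rw [← heq] at a2; exact a2)
    rw [heq] at a1
    have a4 := a1.append a3
    rw [f0, fl] at a4
    have q1 := hmin (i + (l - j)) (by omega) (by omega) u _ a4
    have q := hQ _ _ _ _ q1 q2
    apply hn
    convert q using 1
    · omega
    · rw [mul_right_comm, Finset.prod_Ico_consecutive _ (by omega) (by omega),
        Finset.prod_Ico_consecutive _ (by omega) (by omega), walkSign, Finset.range_eq_Ico]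
  intro i hi j hj hij
  rcases lt_trichotomy i j with h | h | h
  · exact absurd hij (key i j h hj)
  · exact h
  · exact absurd hij.symm (key j i h hi)

/-- The data of a cycle that we use: its vertex set, length and sign. -/
def Cyc (S : Fin n → Fin n → ℤ) (V : Finset (Fin n)) (p : ℕ) (σ : ℤ) : Prop :=
  V.card = p ∧ 0 < p ∧ (∀ u ∈ V, SW S p u u σ) ∧ ∀ u ∈ V, ∃ w ∈ V, S w u ≠ 0

lemma cyc_of_seq {f : ℕ → Fin n} {l : ℕ} (h : IsCycleSeq (Underlying S) f l) :
    ∃ V, Cyc S V l (walkSign S f l) := by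
  classical
  obtain ⟨h0, h1, h2, h3⟩ := h
  refine ⟨(Finset.range l).image f, ?_, h0, ?_, ?_⟩
  · rw [Finset.card_image_of_injOn, Finset.card_range]
    intro i hi j hj hij
    exact h3 i (by simpa using hi) j (by simpa using hj) hij
  · intro u hu
    simp only [Finset.mem_image, Finset.mem_range] at hu
    obtain ⟨i, hi, rfl⟩ := hu
    have a1 := SW.of_seq (S := S) f l h2 0 i (by omega)
    have a3 := SW.of_seq (S := S) f l h2 i (l - i) (by omega)
    rw [show i + (l - i) = l by omega, h1] at a3
    rw [show 0 + i = i by omega] at a1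
    have := a3.append a1
    rw [mul_comm, Finset.prod_Ico_consecutive _ (by omega) (by omega),
      show l - i + i = l by omega] at this
    rw [walkSign, Finset.range_eq_Ico]
    exact this
  · intro u hu
    simp only [Finset.mem_image, Finset.mem_range] at hu ⊢
    obtain ⟨i, hi, rfl⟩ := hu
    rcases Nat.eq_zero_or_pos i with rfl | hi0
    · refine ⟨_, ⟨l - 1, by omega, rfl⟩, ?_⟩
      have := h2 (l - 1) (by omega)
      rwa [show l - 1 + 1 = l by omega, h1] at this
    · refine ⟨_, ⟨i - 1, by omega, rfl⟩, ?_⟩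
      have := h2 (i - 1) (by omega)
      rwa [show i - 1 + 1 = i by omega] at this

lemma exists_cyc (Q : ℕ → ℤ → Prop)
    (hQ : ∀ p q σ τ, Q p σ → Q q τ → Q (p + q) (σ * τ))
    (hex : ∃ l, 0 < l ∧ ∃ u σ, SW S l u u σ ∧ ¬ Q l σ) :
    ∃ V l σ, Cyc S V l σ ∧ ¬ Q l σ := by
  obtain ⟨f, l, h, hq⟩ := exists_cycle Q hQ hex
  obtain ⟨V, hV⟩ := cyc_of_seq h
  exact ⟨V, l, _, hV, hq⟩

lemma Cyc.le {V : Finset (Fin n)} {p : ℕ} {σ : ℤ} (h : Cyc S V p σ) : p ≤ n := by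
  rw [← h.1]; simpa using Finset.card_le_univ V

lemma Cyc.nonempty {V : Finset (Fin n)} {p : ℕ} {σ : ℤ} (h : Cyc S V p σ) : V.Nonempty := by
  rw [← Finset.card_pos, h.1]; exact h.2.1

lemma Cyc.sign (hsp : SignPattern S) {V : Finset (Fin n)} {p : ℕ} {σ : ℤ} (h : Cyc S V p σ) :
    σ = 1 ∨ σ = -1 := by
  obtain ⟨u, hu⟩ := h.nonempty
  exact (h.2.2.1 u hu).sign hsp

/-- Growth lemma. -/
lemma growth (r : Fin n → Fin n → Prop) (hr : ∀ a b, Relation.ReflTransGen r a b)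
    (V : Finset (Fin n)) (hV : V.Nonempty) (P : ℕ → Fin n → Prop)
    (h0 : ∀ v ∈ V, P 0 v) (h1 : ∀ i a, P i a → P (i + 1) a)
    (h2 : ∀ i a b, P i a → r a b → P (i + 1) b) (i : ℕ) :
    ∃ R : Finset (Fin n), R.Nonempty ∧ min n (V.card + i) ≤ R.card ∧ ∀ v ∈ R, P i v := by
  classical
  induction i with
  | zero => exact ⟨V, hV, by simp, h0⟩
  | succ i ih =>
    obtain ⟨R, hR, hc, hP⟩ := ih
    by_cases hu : R = Finset.univ
    · refine ⟨R, hR, ?_, fun v hv => h1 _ _ (hP v hv)⟩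
      rw [hu]; simp
    · have : ∃ a ∈ R, ∃ b, b ∉ R ∧ r a b := by
        by_contra hc
        push Not at hc
        apply hu
        obtain ⟨a, ha⟩ := hR
        ext b
        simp only [Finset.mem_univ, iff_true]
        have hab := hr a b
        induction hab with
        | refl => exact ha
        | tail _ hbc ih =>
          by_contra hn
          exact hc _ ih _ hn hbc
      obtain ⟨a, ha, b, hb, hab⟩ := this
      refine ⟨insert b R, by simp, ?_, ?_⟩
      · rw [Finset.card_insert_of_notMem hb]
        omega
      · intro v hv
        rcases Finset.mem_insert.1 hv with rfl | hv
        · exact h2 _ _ _ (hP a ha) hab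
        · exact h1 _ _ (hP v hv)

/-- All pairs are joined by walks of every large length. -/
lemma prim_large (hprim : Primitive (Underlying S)) :
    ∃ p, 0 < p ∧ ∀ q, p ≤ q → ∀ u v, ∃ σ, SW S q u v σ := by
  obtain ⟨p, hp, h⟩ := hprim
  have h' : ∀ u v, ∃ σ, SW S p u v σ := by
    intro u v
    obtain ⟨f, hf⟩ := h u v
    exact ⟨_, SW.of_walk hf⟩
  refine ⟨p, hp, fun q hq => ?_⟩
  induction q, hq using Nat.le_induction with
  | base => exact h'
  | succ q hq ih =>
    intro u v
    obtain ⟨σ, hs⟩ := h' u v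
    obtain ⟨p, rfl⟩ : ∃ p', p = p' + 1 := ⟨p - 1, by omega⟩
    obtain ⟨w, τ, h0, -, -⟩ := hs
    obtain ⟨ρ, hρ⟩ := ih w v
    exact ⟨_, w, ρ, h0, hρ, rfl⟩

lemma pred_walk (hprim : Primitive (Underlying S)) (v : Fin n) (t : ℕ) :
    ∃ u σ, SW S t u v σ := by
  obtain ⟨p, hp, h⟩ := prim_large hprim
  obtain ⟨σ, hs⟩ := h (p + t) (by omega) v v
  obtain ⟨w, _, s2, _, h2, _⟩ := hs.split
  exact ⟨w, s2, h2⟩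

lemma rtg_of_SW {r : Fin n → Fin n → Prop} {s : ℕ}
    (hr : ∀ a b σ, SW S s a b σ → r a b) : ∀ j a b σ, SW S (j * s) a b σ →
    Relation.ReflTransGen r a b := by
  intro j
  induction j with
  | zero =>
    intro a b σ h
    rw [Nat.zero_mul] at h
    obtain ⟨rfl, -⟩ := h
    exact .refl
  | succ j ih =>
    intro a b σ h
    rw [Nat.succ_mul] at h
    obtain ⟨c, s1, s2, h1, h2, -⟩ := h.split
    exact (ih _ _ _ h1).tail (hr _ _ _ h2)

lemma rtg_rev_of_SW {r : Fin n → Fin n → Prop} {s : ℕ}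
    (hr : ∀ a b σ, SW S s a b σ → r b a) : ∀ j a b σ, SW S (j * s) a b σ →
    Relation.ReflTransGen r b a := by
  intro j a b σ h
  have := rtg_of_SW (S := S) (r := fun x y => r y x) hr j a b σ h
  exact Relation.reflTransGen_swap.1 this

/-- Every vertex is within distance `n - |V|` of a nonempty set `V`. -/
lemma reach (hprim : Primitive (Underlying S)) (V : Finset (Fin n)) (hV : V.Nonempty) (v : Fin n) :
    ∃ u ∈ V, ∃ l ≤ n - V.card, ∃ σ, SW S l u v σ := by
  obtain ⟨p, hp, h⟩ := prim_large hprim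
  obtain ⟨R, -, hc, hP⟩ := growth (fun a b => S a b ≠ 0)
    (by
      intro a b
      obtain ⟨σ, hs⟩ := h p le_rfl a b
      refine rtg_of_SW (S := S) (s := 1) ?_ p a b σ (by simpa using hs)
      rintro a b σ ⟨w, τ, h0, ⟨rfl, -⟩, -⟩
      exact h0)
    V hV (fun i v => ∃ u ∈ V, ∃ l ≤ i, ∃ σ, SW S l u v σ)
    (fun v hv => ⟨v, hv, 0, le_rfl, 1, rfl, rfl⟩)
    (by
      rintro i a ⟨u, hu, l, hl, hs⟩
      exact ⟨u, hu, l, by omega, hs⟩)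
    (by
      rintro i a b ⟨u, hu, l, hl, σ, hs⟩ hab
      exact ⟨u, hu, l + 1, by omega, _, hs.append (SW.one hab)⟩)
    (n - V.card)
  have hle : V.card ≤ n := by simpa using Finset.card_le_univ V
  have : R = Finset.univ := by
    apply Finset.eq_univ_of_card
    have : R.card ≤ n := by simpa using Finset.card_le_univ R
    simp only [Fintype.card_fin]
    omega
  exact hP v (by rw [this]; simp)

lemma reach_one (hprim : Primitive (Underlying S)) (u v : Fin n) :
    ∃ l ≤ n - 1, ∃ σ, SW S l u v σ := by
  obtain ⟨w, hw, h⟩ := reach hprim {u} (by simp) v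
  rw [Finset.mem_singleton] at hw
  subst hw
  simpa using h

/-- Upper multiexponent bound. -/
lemma multiexp (hprim : Primitive (Underlying S)) {V : Finset (Fin n)} {s : ℕ} {σ : ℤ}
    (hC : Cyc S V s σ) (X : Finset (Fin n)) (hX : 0 < X.card) (t : ℕ)
    (ht : n - s + s * (n - X.card) ≤ t) (v : Fin n) : ∃ x ∈ X, ∃ τ, SW S t x v τ := by
  classical
  obtain ⟨p, hp, hlarge⟩ := prim_large hprim
  obtain ⟨v', ρ, hv'⟩ := pred_walk hprim v (t - (n - s + s * (n - X.card)))
  -- a vertex of the cycle reaching `v'` in exactly `n - s` steps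
  obtain ⟨c0, hc0, l, hl, σ1, hs1⟩ := reach hprim V hC.nonempty v'
  have hloop : ∀ m, ∃ c ∈ V, ∃ τ, SW S m c c0 τ := by
    intro m
    induction m with
    | zero => exact ⟨c0, hc0, 1, rfl, rfl⟩
    | succ m ih =>
      obtain ⟨c, hc, τ, h⟩ := ih
      obtain ⟨w, hw, hwc⟩ := hC.2.2.2 c hc
      exact ⟨w, hw, _, c, τ, hwc, h, rfl⟩
  rw [hC.1] at hl
  obtain ⟨c, hc, τ, hcc⟩ := hloop (n - s - l)
  have hcv := (hcc.append hs1).append hv'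
  obtain ⟨R, -, hcard, hP⟩ := growth (fun a b => ∃ ρ, SW S s b a ρ)
    (by
      intro a b
      obtain ⟨ρ, hs⟩ := hlarge (p * s) (Nat.le_mul_of_pos_right _ hC.2.1) b a
      exact rtg_rev_of_SW (S := S) (s := s) (fun a b σ h => ⟨σ, h⟩) p b a ρ hs)
    {c} (by simp) (fun i a => ∃ ρ, SW S (i * s) a c ρ)
    (by
      intro a ha
      rw [Finset.mem_singleton] at ha
      subst ha
      exact ⟨1, by simp [SW]⟩)
    (by
      rintro i a ⟨ρ, h⟩
      rw [Nat.succ_mul]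
      exact ⟨_, h.append (hC.2.2.1 c hc)⟩)
    (by
      rintro i a b ⟨ρ, h⟩ ⟨ρ', h'⟩
      rw [Nat.succ_mul, Nat.add_comm]
      exact ⟨_, h'.append h⟩)
    (n - X.card)
  have hXn : X.card ≤ n := by simpa using Finset.card_le_univ X
  have hne : (X ∩ R).Nonempty := by
    rw [← Finset.card_pos]
    have e1 := Finset.card_union_add_card_inter X R
    have e2 : (X ∪ R).card ≤ n := by simpa using Finset.card_le_univ (X ∪ R)
    rw [Finset.card_singleton] at hcard
    omega
  obtain ⟨x, hx⟩ := hne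
  rw [Finset.mem_inter] at hx
  obtain ⟨ρ', hx2⟩ := hP x hx.2
  have hfin := hx2.append hcv
  refine ⟨x, hx.1, ρ' * (τ * σ1 * ρ), ?_⟩
  · have : (n - X.card) * s + (n - s - l + l + (t - (n - s + s * (n - X.card)))) = t := by
      rw [Nat.mul_comm]
      omega
    rwa [this] at hfin
end

section
variable {n : ℕ} {S : Fin n → Fin n → ℤ}

/-- Every vertex is the end of a pair of SSSD walks of length at most `M`. -/
def Good (S : Fin n → Fin n → ℤ) (M : ℕ) : Prop :=
  ∀ v, ∃ u l, l ≤ M ∧ HasSSSD S u v l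

lemma good_of_closed (hsp : SignPattern S) (hprim : Primitive (Underlying S))
    (V : Finset (Fin n)) (hV : V.Nonempty) (m M : ℕ) (σ τ : ℤ) (hne : σ ≠ τ)
    (h1 : ∀ u ∈ V, SW S m u u σ) (h2 : ∀ u ∈ V, SW S m u u τ) (hM : m + (n - V.card) ≤ M) :
    Good S M := by
  intro v
  obtain ⟨u, hu, l, hl, ρ, hs⟩ := reach hprim V hV v
  refine ⟨u, m + l, by omega, hasSSSD_iff.2 ⟨σ * ρ, τ * ρ, ?_, (h1 u hu).append hs,
    (h2 u hu).append hs⟩⟩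
  rcases hs.sign hsp with rfl | rfl <;> simpa using hne

lemma good_of_pair (hn : 6 ≤ n) (hsp : SignPattern S) (hprim : Primitive (Underlying S))
    {V W : Finset (Fin n)} {p q : ℕ} {σ τ : ℤ} (hV : Cyc S V p σ) (hW : Cyc S W q τ)
    (hq : q ≤ n - 2) (hne : σ ^ q ≠ τ ^ p) : Good S (n * (n - 1) - 4) := by
  classical
  have hp := hV.le
  have hp0 := hV.2.1
  have hq0 := hW.2.1
  obtain ⟨N, rfl⟩ : ∃ N, n = N + 2 := ⟨n - 2, by omega⟩
  have hN : (N + 2) * (N + 2 - 1) - 4 + 4 = (N + 2) * (N + 1) := by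
    have : 4 ≤ (N + 2) * (N + 1) := by nlinarith
    rw [show N + 2 - 1 = N + 1 by omega]
    omega
  have e1 := Finset.card_union_add_card_inter V W
  have e2 : (V ∪ W).card ≤ N + 2 := by simpa using Finset.card_le_univ (V ∪ W)
  rw [hV.1, hW.1] at e1
  rw [Nat.add_sub_cancel] at hq
  by_cases hI : (V ∩ W).Nonempty
  · have hc := Finset.card_pos.2 hI
    have hcn : (V ∩ W).card ≤ N + 2 := by simpa using Finset.card_le_univ (V ∩ W)
    refine good_of_closed hsp hprim (V ∩ W) hI (q * p) _ (σ ^ q) (τ ^ p) hne ?_ ?_ ?_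
    · intro u hu
      exact (hV.2.2.1 u (Finset.mem_inter.1 hu).1).pow q
    · intro u hu
      rw [Nat.mul_comm]
      exact (hW.2.2.1 u (Finset.mem_inter.1 hu).2).pow p
    · rcases Nat.lt_or_ge p (N + 2) with h | h
      · have : q * p ≤ N * (N + 1) := Nat.mul_le_mul hq (by omega)
        have h5 : N + 2 - (V ∩ W).card ≤ N + 1 := by omega
        nlinarith
      · have hpe : p = N + 2 := by omega
        have hs : N + 2 - (V ∩ W).card ≤ N + 2 - q := by omega
        have hs2 : N + 2 - q + q = N + 2 := by omega
        subst hpe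
        nlinarith
  · rw [Finset.not_nonempty_iff_eq_empty] at hI
    rw [hI, Finset.card_empty] at e1
    intro v
    obtain ⟨u, hu⟩ := hV.nonempty
    obtain ⟨w, hw⟩ := hW.nonempty
    obtain ⟨a, ha, α, hα⟩ := reach_one hprim u w
    obtain ⟨b, hb, β, hβ⟩ := reach_one hprim w v
    have s1 := (((hV.2.2.1 u hu).pow q).append hα).append hβ
    have s2 := (hα.append ((hW.2.2.1 w hw).pow p)).append hβ
    refine ⟨u, q * p + a + b, ?_, hasSSSD_iff.2 ⟨_, α * τ ^ p * β, ?_, s1, ?_⟩⟩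
    · have : p + q ≤ N + 2 := by omega
      rw [show N + 2 - 1 = N + 1 by omega] at *
      have h4 : 4 * (q * p) ≤ (N + 2) * (N + 2) := by
        zify
        have : (p : ℤ) + q ≤ N + 2 := by exact_mod_cast this
        nlinarith [sq_nonneg ((p : ℤ) - q)]
      nlinarith
    · rcases hα.sign hsp with rfl | rfl <;> rcases hβ.sign hsp with rfl | rfl <;> simpa using hne
    · convert s2 using 1
      ring

lemma exists_bad (hprim : Primitive (Underlying S)) (hsp : SignPattern S) (hnp : NonPowerful S)
    (ε : ℤ) : ∃ V p τ, Cyc S V p τ ∧ τ ≠ ε ^ p := by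
  obtain ⟨u, v, l, h⟩ := hnp
  obtain ⟨σ, τ, hne, h1, h2⟩ := hasSSSD_iff.1 h
  obtain ⟨p, hp, hl⟩ := prim_large hprim
  obtain ⟨ρ, hρ⟩ := hl p le_rfl v u
  refine exists_cyc (fun l σ => σ = ε ^ l) ?_ ⟨l + p, by omega, u, ?_⟩
  · rintro p q σ τ rfl rfl
    rw [pow_add]
  · by_contra hc
    push Not at hc
    have c1 := hc _ (h1.append hρ)
    have c2 := hc _ (h2.append hρ)
    rw [← c2] at c1
    apply hne
    rcases hρ.sign hsp with rfl | rfl <;> simpa using c1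

lemma exists_cyc_not_dvd (hn : 0 < n) (hprim : Primitive (Underlying S)) (d : ℕ) (hd : d ≠ 1) :
    ∃ f l, IsCycleSeq (Underlying S) f l ∧ ¬ d ∣ l := by
  obtain ⟨p, hp, hl⟩ := prim_large hprim
  refine exists_cycle (S := S) (fun l _ => d ∣ l) (fun p q _ _ h1 h2 => Dvd.dvd.add h1 h2) ?_
  by_contra hc
  push Not at hc
  obtain ⟨σ, h1⟩ := hl p le_rfl ⟨0, hn⟩ ⟨0, hn⟩
  obtain ⟨τ, h2⟩ := hl (p + 1) (by omega) ⟨0, hn⟩ ⟨0, hn⟩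
  have d1 := hc _ hp _ _ h1
  have d2 := hc _ (by omega) _ _ h2
  exact hd (Nat.dvd_one.1 ((Nat.dvd_add_right d1).1 d2))

theorem key (hn : 6 ≤ n) (hsp : SignPattern S) (hprim : Primitive (Underlying S))
    (hnp : NonPowerful S) {V : Finset (Fin n)} {s : ℕ} {σ : ℤ} (hC : Cyc S V s σ)
    (hs : s ≤ n - 2) : Good S (n * (n - 1) - 4) := by
  classical
  by_contra hG
  -- no distinguished pair with a short cycle
  have hpair : ∀ {V W : Finset (Fin n)} {p q : ℕ} {σ τ : ℤ}, Cyc S V p σ → Cyc S W q τ →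
      q ≤ n - 2 → σ ^ q = τ ^ p := by
    intro V W p q σ τ h1 h2 h3
    by_contra hne
    exact hG (good_of_pair hn hsp hprim h1 h2 h3 hne)
  -- short cycles are even
  have heven : ∀ {W : Finset (Fin n)} {q : ℕ} {τ : ℤ}, Cyc S W q τ → q ≤ n - 2 → Even q := by
    intro W q τ h1 h2
    by_contra ho
    rw [Nat.not_even_iff_odd] at ho
    obtain ⟨U, p, ρ, hU, hne⟩ := exists_bad hprim hsp hnp τ
    have := hpair hU h1 h2
    apply hne
    rw [← this]
    rcases hU.sign hsp with rfl | rfl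
    · simp
    · rw [ho.neg_one_pow]
  -- an odd cycle
  obtain ⟨f, p0, hf, hodd⟩ := exists_cyc_not_dvd (by omega) hprim 2 (by norm_num)
  obtain ⟨U0, hU0⟩ := cyc_of_seq hf
  generalize walkSign S f p0 = τ0 at hU0
  rw [← even_iff_two_dvd, Nat.not_even_iff_odd] at hodd
  have hp0 : n - 1 ≤ p0 := by
    by_contra hc
    exact (Nat.not_even_iff_odd.2 hodd) (heven hU0 (by omega))
  have hp0n := hU0.le
  have hτ0 := hU0.sign hsp
  -- short cycles are positive
  have hpos : ∀ {W : Finset (Fin n)} {q : ℕ} {τ : ℤ}, Cyc S W q τ → q ≤ n - 2 → τ = 1 := by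
    intro W q τ h1 h2
    have e := heven h1 h2
    have := hpair hU0 h1 h2
    rcases h1.sign hsp with rfl | rfl
    · rfl
    · rw [hodd.neg_one_pow] at this
      rcases hτ0 with rfl | rfl
      · simp at this
      · rw [e.neg_one_pow] at this
        norm_num at this
  obtain ⟨U, p, τ, hU, hne⟩ := exists_bad hprim hsp hnp τ0
  have hpn := hU.le
  have hp : n - 1 ≤ p := by
    by_contra hc
    have e := heven hU (by omega)
    have := hpos hU (by omega)
    apply hne
    rw [this]
    rcases hτ0 with rfl | rfl
    · simp
    · rw [e.neg_one_pow]
  have hcard : ∀ A B : Finset (Fin n), n < A.card + B.card → (A ∩ B).Nonempty := by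
    intro A B h
    rw [← Finset.card_pos]
    have e1 := Finset.card_union_add_card_inter A B
    have e2 : (A ∪ B).card ≤ n := by simpa using Finset.card_le_univ (A ∪ B)
    omega
  have hbig : 5 * n ≤ n * (n - 1) := by
    rw [Nat.mul_comm]; exact Nat.mul_le_mul le_rfl (by omega)
  have hs1 := hpos hC hs
  have hse := heven hC hs
  have hs0 := hC.2.1
  subst hs1
  rcases Nat.even_or_odd p with hpe | hpo
  · -- the triple case
    have hτ : τ = -1 := by
      rcases hU.sign hsp with rfl | rfl
      · exfalso
        apply hne
        rcases hτ0 with rfl | rfl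
        · simp
        · rw [hpe.neg_one_pow]
      · rfl
    have triple : ∀ {V1 V2 : Finset (Fin n)} {σ1 σ2 : ℤ}, Cyc S V1 n σ1 → Cyc S V2 (n - 1) σ2 →
        σ1 ^ (n - s - 1) ≠ σ2 ^ (n - s) → False := by
      intro V1 V2 σ1 σ2 g1 g2 hd
      apply hG
      have hs2 : 2 ≤ s := by
        rcases hse with ⟨k, hk⟩
        omega
      have hI : (V2 ∩ V).Nonempty := hcard _ _ (by rw [g2.1, hC.1]; omega)
      have hV1 : V1 = Finset.univ := Finset.eq_univ_of_card _ (by rw [g1.1]; simp)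
      refine good_of_closed hsp hprim (V2 ∩ V) hI ((n - s) * (n - 1)) _ (σ1 ^ (n - s - 1) * 1)
        (σ2 ^ (n - s)) (by simpa using hd) ?_ ?_ ?_
      · intro u hu
        have w1 := (g1.2.2.1 u (by rw [hV1]; simp)).pow (n - s - 1)
        have w2 := w1.append (hC.2.2.1 u (Finset.mem_inter.1 hu).2)
        have : (n - s - 1) * n + s = (n - s) * (n - 1) := by
          obtain ⟨r, rfl⟩ : ∃ r, n = s + r + 1 := ⟨n - s - 1, by omega⟩
          rw [show s + r + 1 - s - 1 = r by omega, show s + r + 1 - s = r + 1 by omega,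
            show s + r + 1 - 1 = s + r by omega]
          ring
        rwa [this] at w2
      · intro u hu
        exact (g2.2.2.1 u (Finset.mem_inter.1 hu).1).pow (n - s)
      · have hc := Finset.card_pos.2 hI
        obtain ⟨N, rfl⟩ : ∃ N, n = N + 2 := ⟨n - 2, by omega⟩
        have h3 : (N + 2 - s) * (N + 2 - 1) ≤ N * (N + 1) := Nat.mul_le_mul (by omega) (by omega)
        have hN : (N + 2) * (N + 2 - 1) - 4 + 4 = (N + 2) * (N + 1) := by
          rw [show N + 2 - 1 = N + 1 by omega] at *
          omega
        nlinarith [Nat.sub_le_sub_left hc (N + 2)]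
    have hpp : p ≠ p0 := by
      rintro rfl
      exact (Nat.not_even_iff_odd.2 hodd) hpe
    rcases Nat.lt_or_ge p n with hlt | hge
    · have e1 : p = n - 1 := by omega
      have e2 : p0 = n := by omega
      subst e2
      subst e1
      apply triple hU0 hU
      have o1 : Odd (p0 - s) := by
        rw [Nat.odd_sub (by omega)]
        simp [hse, hodd]
      have o2 : Even (p0 - s - 1) := by
        obtain ⟨k, hk⟩ := o1
        exact ⟨k, by omega⟩
      rw [hτ, o1.neg_one_pow]
      rcases hτ0 with rfl | rfl
      · norm_num
      · rw [o2.neg_one_pow]; norm_num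
    · have e1 : p = n := by omega
      have e2 : p0 = n - 1 := by omega
      subst e1
      subst e2
      apply triple hU hU0
      have o1 : Even (p - s) := by
        rw [Nat.even_sub (by omega)]
        simp [hse, hpe]
      have o2 : Odd (p - s - 1) := by
        obtain ⟨k, hk⟩ := o1
        exact ⟨k - 1, by omega⟩
      rw [hτ, o2.neg_one_pow]
      rcases hτ0 with rfl | rfl
      · norm_num
      · rw [o1.neg_one_pow]; norm_num
  · -- two odd cycles of the same length with opposite signs
    have e : p = p0 := by
      obtain ⟨a, ha⟩ := hpo
      obtain ⟨b, hb⟩ := hodd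
      omega
    subst e
    apply hG
    have hI : (U ∩ U0).Nonempty := hcard _ _ (by rw [hU.1, hU0.1]; omega)
    refine good_of_closed hsp hprim (U ∩ U0) hI p _ τ τ0 ?_ ?_ ?_ ?_
    · intro h
      apply hne
      rw [h]
      rcases hτ0 with h | h <;> rw [h]
      · simp
      · rw [hpo.neg_one_pow]
    · intro u hu
      exact hU.2.2.1 u (Finset.mem_inter.1 hu).1
    · intro u hu
      exact hU0.2.2.1 u (Finset.mem_inter.1 hu).2
    · omega

/-- The conclusion of the theorem from the existence of a short cycle. -/
theorem of_short (hn : 6 ≤ n) (k : ℕ) (hk1 : 1 ≤ k) (hkn : k ≤ n) (hsp : SignPattern S)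
    (hprim : Primitive (Underlying S)) (hnp : NonPowerful S)
    {V : Finset (Fin n)} {s : ℕ} {σ : ℤ} (hC : Cyc S V s σ) (hs : s ≤ n - 2) :
    upperBase S k ≤ (2 * n - k) * (n - 1) - 3 := by
  classical
  have hkey := key hn hsp hprim hnp hC hs
  unfold upperBase
  apply csSup_le'
  rintro e ⟨X, hX, rfl⟩
  -- from exact reachability of all vertices by walks of length at least `F`
  have main : ∀ F, (∀ t, F ≤ t → ∀ v, ∃ x ∈ X, ∃ τ, SW S t x v τ) →
      setBase S X ≤ F + (n * (n - 1) - 4) := by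
    intro F hF
    apply Nat.sInf_le
    intro v
    obtain ⟨u, l, hl, h⟩ := hkey v
    obtain ⟨a, b, hab, h1, h2⟩ := hasSSSD_iff.1 h
    obtain ⟨x, hx, τ, hτ⟩ := hF (F + (n * (n - 1) - 4) - l) (by omega) u
    refine ⟨x, hx, hasSSSD_iff.2 ⟨τ * a, τ * b, ?_, ?_, ?_⟩⟩
    · rcases hτ.sign hsp with rfl | rfl <;> simpa using hab
    · have := hτ.append h1
      rwa [Nat.sub_add_cancel (by omega)] at this
    · have := hτ.append h2
      rwa [Nat.sub_add_cancel (by omega)] at this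
  have hbig : 5 * n ≤ n * (n - 1) := by
    rw [Nat.mul_comm]; exact Nat.mul_le_mul le_rfl (by omega)
  rcases Nat.lt_or_ge k n with hlt | hge
  · refine (main (n - s + s * (n - k)) ?_).trans ?_
    · intro t ht v
      exact multiexp hprim hC X (by omega) t (by rw [hX]; exact ht) v
    · obtain ⟨a, ha⟩ : ∃ a, n - k = a + 1 := ⟨n - k - 1, by omega⟩
      rw [ha, show 2 * n - k = n + (a + 1) by omega]
      have h1 : n - s + s * (a + 1) = n + s * a := by
        rw [Nat.mul_add, Nat.mul_one]; omega
      have h2 : s * a ≤ (n - 2) * a := Nat.mul_le_mul hs le_rfl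
      have h3 : (n + (a + 1)) * (n - 1) = n * (n - 1) + (n - 2) * a + a + (n - 1) := by
        obtain ⟨N, rfl⟩ : ∃ N, n = N + 2 := ⟨n - 2, by omega⟩
        rw [show N + 2 - 1 = N + 1 by omega, show N + 2 - 2 = N by omega]
        ring
      omega
  · have hkn' : k = n := by omega
    have hXu : X = Finset.univ := Finset.eq_univ_of_card _ (by rw [hX]; simp [hkn'])
    refine (main 0 ?_).trans ?_
    · intro t _ v
      obtain ⟨u, τ, h⟩ := pred_walk hprim v t
      exact ⟨u, by rw [hXu]; simp, τ, h⟩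
    · rw [hkn', show 2 * n - n = n by omega]
      omega
end

section
variable {n : ℕ} {S : Fin n → Fin n → ℤ}

/-- A primitive digraph without closed walks of length at most `n - 2` is `D₁` or `D₂`. -/
theorem iso_of_no_short (hn : 6 ≤ n) (hprim : Primitive (Underlying S))
    (hno : ∀ l, 0 < l → l ≤ n - 2 → ∀ u σ, ¬ SW S l u u σ) :
    DigraphIso (Underlying S) (D1 n) ∨ DigraphIso (Underlying S) (D2 n) := by
  classical
  -- the Hamiltonian cycle
  obtain ⟨f, l, hf, hdvd⟩ := exists_cyc_not_dvd (by omega) hprim (n - 1) (by omega)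
  obtain ⟨V, hV⟩ := cyc_of_seq hf
  have hln := hV.le
  have hl : l = n := by
    obtain ⟨u, hu⟩ := hV.nonempty
    by_contra hne
    rcases Nat.lt_or_ge (n - 2) l with h | h
    · apply hdvd
      rw [show l = n - 1 by omega]
    · exact hno l hV.2.1 h u _ (hV.2.2.1 u hu)
  subst hl
  obtain ⟨-, f1, f2, f3⟩ := hf
  obtain ⟨c, hper, harc, hinj⟩ : ∃ c : ℕ → Fin l, (∀ i, c (i + l) = c i) ∧
      (∀ i, S (c i) (c (i + 1)) ≠ 0) ∧ (∀ i j, c i = c j → i % l = j % l) := by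
    refine ⟨fun i => f (i % l), ?_, ?_, ?_⟩
    · intro i
      simp
    · intro i
      have hi : i % l < l := Nat.mod_lt _ (by omega)
      have h := f2 _ hi
      show S (f (i % l)) (f ((i + 1) % l)) ≠ 0
      rw [Nat.add_mod, Nat.mod_eq_of_lt (show 1 < l by omega)]
      rcases Nat.lt_or_ge (i % l + 1) l with h' | h'
      · rw [Nat.mod_eq_of_lt h']
        exact h
      · have e : i % l + 1 = l := by omega
        rw [e, Nat.mod_self, ← f1]
        rw [e] at h
        exact h
    · intro i j h
      exact f3 _ (Nat.mod_lt _ (by omega)) _ (Nat.mod_lt _ (by omega)) h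
  have hwalk : ∀ a d, ∃ σ, SW S d (c a) (c (a + d)) σ := fun a d =>
    ⟨_, SW.of_seq (S := S) c (a + d) (fun i _ => harc i) a d le_rfl⟩
  have hinj2 : ∀ b, Function.Injective (fun m : Fin l => c (b + m.val)) := by
    intro b i j h
    have h1 : b + i.val ≡ b + j.val [MOD l] := hinj _ _ h
    have h2 := Nat.ModEq.add_left_cancel' b h1
    have h3 : i.val % l = j.val % l := h2
    rw [Nat.mod_eq_of_lt i.2, Nat.mod_eq_of_lt j.2] at h3
    exact Fin.ext h3
  have hbij : ∀ b, Function.Bijective (fun m : Fin l => c (b + m.val)) := fun b =>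
    Finite.injective_iff_bijective.1 (hinj2 b)
  -- all arcs
  have hcls : ∀ i v, S (c i) v ≠ 0 → v = c (i + 1) ∨ (v = c (i + 2) ∧ S (c i) (c (i + 2)) ≠ 0) := by
    intro i v h
    obtain ⟨⟨m, hm⟩, rfl⟩ := (hbij (i + 1)).2 v
    simp only at h ⊢
    obtain ⟨σ, hw⟩ := hwalk (i + 1 + m) (l - 1 - m)
    rw [show i + 1 + m + (l - 1 - m) = i + l by omega, hper] at hw
    have hw2 := hw.append (SW.one h)
    have : ¬ (l - 1 - m + 1 ≤ l - 2) := fun hle => hno _ (by omega) hle _ _ hw2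
    have hm2 : m = 0 ∨ m = 1 := by omega
    rcases hm2 with rfl | rfl
    · exact Or.inl rfl
    · exact Or.inr ⟨rfl, h⟩
  have hcompat : ∀ a b, S (c a) (c (a + 2)) ≠ 0 → S (c b) (c (b + 2)) ≠ 0 → a + 2 ≤ b →
      b + 2 ≤ a + l → False := by
    intro a b ha hb h1 h2
    obtain ⟨σ, w1⟩ := hwalk (a + 2) (b - (a + 2))
    obtain ⟨τ, w2⟩ := hwalk (b + 2) (a + l - (b + 2))
    rw [show a + 2 + (b - (a + 2)) = b by omega] at w1
    rw [show b + 2 + (a + l - (b + 2)) = a + l by omega, hper] at w2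
    have w := (((SW.one ha).append w1).append (SW.one hb)).append w2
    exact hno _ (by omega) (by omega) _ _ w
  have hJper : ∀ i, S (c (i + l)) (c (i + l + 2)) ≠ 0 ↔ S (c i) (c (i + 2)) ≠ 0 := by
    intro i
    rw [show i + l + 2 = i + 2 + l by omega, hper, hper]
  -- there is a jump
  have hJex : ∃ i, S (c i) (c (i + 2)) ≠ 0 := by
    by_contra hc
    push Not at hc
    obtain ⟨g, m, hg, hm⟩ := exists_cyc_not_dvd (by omega) hprim l (by omega)
    obtain ⟨W, hW⟩ := cyc_of_seq hg
    obtain ⟨u, hu⟩ := hW.nonempty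
    have hs := hW.2.2.1 u hu
    have hstep : ∀ m i v σ, SW S m (c i) v σ → v = c (i + m) := by
      intro m
      induction m with
      | zero =>
        rintro i v σ ⟨h, -⟩
        exact h.symm
      | succ m ih =>
        rintro i v σ ⟨w, τ, h0, h1, -⟩
        rcases hcls i w h0 with rfl | ⟨-, h⟩
        · rw [ih _ _ _ h1]
          congr 1
          omega
        · exact absurd (hc i) h
    obtain ⟨⟨i, hi⟩, rfl⟩ := (hbij 0).2 u
    have h1 := hinj _ _ (hstep _ _ _ _ hs)
    apply hm
    have h2 : 0 + i + 0 ≡ 0 + i + m [MOD l] := h1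
    have h3 : 0 ≡ m [MOD l] := Nat.ModEq.add_left_cancel' (0 + i) h2
    exact (Nat.modEq_zero_iff_dvd).1 h3.symm
  obtain ⟨b, hb1, hb2⟩ : ∃ b, S (c (b + (l - 2))) (c (b + (l - 2) + 2)) ≠ 0 ∧
      ¬ S (c (b + (l - 3))) (c (b + (l - 3) + 2)) ≠ 0 := by
    have hJ2 : ∃ i, S (c i) (c (i + 2)) ≠ 0 ∧ ¬ S (c (i + (l - 1))) (c (i + (l - 1) + 2)) ≠ 0 := by
      obtain ⟨i, hi⟩ := hJex
      by_cases h : S (c (i + (l - 1))) (c (i + (l - 1) + 2)) ≠ 0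
      · refine ⟨i + (l - 1), h, ?_⟩
        intro h'
        rw [show i + (l - 1) + (l - 1) = i + (l - 2) + l by omega, hJper] at h'
        exact hcompat i (i + (l - 2)) hi h' (by omega) (by omega)
      · exact ⟨i, hi, h⟩
    obtain ⟨i, hi, hi'⟩ := hJ2
    refine ⟨i + 2, ?_, ?_⟩
    · rw [show i + 2 + (l - 2) = i + l by omega, hJper]
      exact hi
    · rw [show i + 2 + (l - 3) = i + (l - 1) by omega]
      exact hi'
  have hJlow : ∀ i, i < l - 2 → ¬ S (c (b + i)) (c (b + i + 2)) ≠ 0 := by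
    intro i hi h
    rcases Nat.lt_or_ge i (l - 3) with h' | h'
    · exact hcompat _ _ h hb1 (by omega) (by omega)
    · rw [show i = l - 3 by omega] at h
      exact hb2 h
  have hidx : ∀ j m, j < l → m < 2 * l → c (b + j) = c (b + m) → j = m ∨ j + l = m := by
    intro j m hj hm h
    rcases Nat.lt_or_ge m l with h' | h'
    · left
      exact congrArg Fin.val (hinj2 b (a₁ := ⟨j, hj⟩) (a₂ := ⟨m, h'⟩) h)
    · right
      have e : c (b + m) = c (b + (m - l)) := by
        rw [show b + m = b + (m - l) + l by omega, hper]
      rw [e] at h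
      have := congrArg Fin.val (hinj2 b (a₁ := ⟨j, hj⟩) (a₂ := ⟨m - l, by omega⟩) h)
      simp only at this
      omega
  have hfwd : ∀ i j, i < l → j < l → S (c (b + i)) (c (b + j)) ≠ 0 →
      j = i + 1 ∨ (i = l - 1 ∧ j = 0) ∨ (i = l - 2 ∧ j = 0) ∨
      (i = l - 1 ∧ j = 1 ∧ S (c (b + (l - 1))) (c (b + (l - 1) + 2)) ≠ 0) := by
    intro i j hi hj h
    rcases hcls _ _ h with h' | ⟨h', hJ⟩
    · rcases hidx j (i + 1) hj (by omega) (by rw [h']; rfl) with h'' | h'' <;> omega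
    · have hi2 : ¬ i < l - 2 := fun hc => hJlow i hc hJ
      rcases Nat.lt_or_ge i (l - 1) with h1 | h1
      · rcases hidx j (i + 2) hj (by omega) (by rw [h']; rfl) with h'' | h'' <;> omega
      · have e : i = l - 1 := by omega
        rw [e] at hJ
        rcases hidx j (i + 2) hj (by omega) (by rw [h']; rfl) with h'' | h''
        · omega
        · exact Or.inr (Or.inr (Or.inr ⟨e, by omega, hJ⟩))
  have hD1 : ∀ i j : Fin l, D1 l i j → S (c (b + i)) (c (b + j)) ≠ 0 := by
    rintro ⟨i, hi⟩ ⟨j, hj⟩ h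
    simp only [D1] at h ⊢
    rcases h with h | ⟨h, h'⟩ | ⟨h, h'⟩
    · rw [h]
      exact harc (b + i)
    · have := harc (b + i)
      rwa [show b + i + 1 = b + j + l by omega, hper] at this
    · rw [h]
      rwa [show b + (l - 2) + 2 = b + j + l by omega, hper] at hb1
  have hiso : ∀ B : Fin l → Fin l → Prop,
      (∀ i j : Fin l, S (c (b + i)) (c (b + j)) ≠ 0 ↔ B i j) → DigraphIso (Underlying S) B := by
    intro B hB
    refine ⟨(Equiv.ofBijective _ (hbij b)).symm, fun u v => ?_⟩
    rw [← hB]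
    have e : ∀ u, c (b + ((Equiv.ofBijective _ (hbij b)).symm u : Fin l).val) = u := fun u =>
      (Equiv.ofBijective _ (hbij b)).apply_symm_apply u
    rw [e, e]
    rfl
  by_cases hlast : S (c (b + (l - 1))) (c (b + (l - 1) + 2)) ≠ 0
  · right
    apply hiso
    intro i j
    constructor
    · intro h
      rcases hfwd i j i.2 j.2 h with h | h | h | ⟨h, h', -⟩
      · exact Or.inl (Or.inl h)
      · exact Or.inl (Or.inr (Or.inl h))
      · exact Or.inl (Or.inr (Or.inr h))
      · exact Or.inr ⟨h, h'⟩
    · rintro (h | ⟨h, h'⟩)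
      · exact hD1 i j h
      · rw [h, h']
        rwa [show b + (l - 1) + 2 = b + 1 + l by omega, hper] at hlast
  · left
    apply hiso
    intro i j
    constructor
    · intro h
      rcases hfwd i j i.2 j.2 h with h | h | h | ⟨-, -, h⟩
      · exact Or.inl h
      · exact Or.inr (Or.inl h)
      · exact Or.inr (Or.inr h)
      · exact absurd h hlast
    · exact hD1 i j
end

/-- Theorem 3.3: if `n ≥ 6` and the underlying digraph of the primitive non-powerful
signed digraph `S` is isomorphic to neither `D₁` nor `D₂`, then
`L(S,k) ≤ (2n-k)(n-1) - 3`. -/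
theorem upperBase_le_other {n : ℕ} (hn : 6 ≤ n) (k : ℕ) (hk1 : 1 ≤ k) (hkn : k ≤ n)
    (S : Fin n → Fin n → ℤ) (hsp : SignPattern S)
    (hprim : Primitive (Underlying S)) (hnp : NonPowerful S)
    (h1 : ¬ DigraphIso (Underlying S) (D1 n))
    (h2 : ¬ DigraphIso (Underlying S) (D2 n)) :
    upperBase S k ≤ (2 * n - k) * (n - 1) - 3 := by
  by_cases hshort : ∃ l, 0 < l ∧ ∃ u σ, SW S l u u σ ∧ ¬ (n - 2 < l)
  · obtain ⟨V, s, σ, hC, hs⟩ := exists_cyc (S := S) (fun l _ => n - 2 < l)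
      (fun p q _ _ hp hq => by omega) hshort
    exact of_short hn k hk1 hkn hsp hprim hnp hC (by omega)
  · exfalso
    push Not at hshort
    rcases iso_of_no_short hn hprim (fun l h0 hl u σ h => by
      have := hshort l h0 u σ h
      omega) with h | h
    · exact h1 h
    · exact h2 h
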